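/- Let X and Y be finite nonempty alphabets, P_X a probability mass function on X, W a channel with W(y|x) > 0 for all x, y and Σ_y W(y|x) = 1 for each x, U : X×Y → (0,∞), and R ∈ ℝ. For a channel Q (Q(y|x) ≥ 0, Σ_y Q(y|x) = 1), let Q_{XY}(x,y) = P_X(x)Q(y|x), Q_Y(y) = Σ_x Q_{XY}(x,y), and let E(Q) be the set of conditional probability assignments Q'(x|y) satisfying Σ_{x,y} Q_Y(y) Q'(x|y) log₂ U(x,y) ≥ Σ_{x,y} Q_{XY}(x,y) log₂ U(x,y). Then min over channels Q of { D(Q‖W|P_X) + [ H(P_X) − R − max_{Q'∈E(Q)} H_Q(X'|Y) ]_+ } = max_{ρ∈[0,1]} sup_{θ≥0} { −Σ_x P_X(x) log₂( Σ_y W(y|x) / U_θ(x|y)^ρ ) + ρ(H(P_X) − R) }, where U_θ(x|y) = U(x,y)^θ / Σ_{x'} U(x',y)^θ and H_Q(X'|Y) = −Σ_y Q_Y(y) Σ_x Q'(x|y) log₂ Q'(x|y). -/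

import Mathlib

/-- Base-2 entropy of a probability mass function on a finite alphabet. -/
noncomputable def entropy2 {X : Type*} [Fintype X] (P : X → ℝ) : ℝ :=
  -∑ x, P x * Real.logb 2 (P x)

/-- The normalized metric `U_θ(x|y) = U(x,y)^θ / Σ_{x'} U(x',y)^θ`. -/
noncomputable def Utheta {X Y : Type*} [Fintype X] (U : X → Y → ℝ) (θ : ℝ)
    (x : X) (y : Y) : ℝ :=
  U x y ^ θ / ∑ x', U x' y ^ θ

/-- Weighted conditional divergence `D(Q‖W|P_X)` (base-2 logarithm). -/
noncomputable def condDiv2 {X Y : Type*} [Fintype X] [Fintype Y]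
    (P : X → ℝ) (Q W : X → Y → ℝ) : ℝ :=
  ∑ x, P x * ∑ y, Q x y * Real.logb 2 (Q x y / W x y)

/-- Row-stochastic matrices. -/
def StochMat (I J : Type*) [Fintype J] : Set (I → J → ℝ) :=
  Set.univ.pi fun _ => stdSimplex ℝ J

theorem mem_StochMat {I J : Type*} [Fintype J] {Z : I → J → ℝ} :
    Z ∈ StochMat I J ↔ (∀ i j, 0 ≤ Z i j) ∧ ∀ i, ∑ j, Z i j = 1 := by
  simp only [StochMat, Set.mem_pi, Set.mem_univ, true_imp_iff, stdSimplex, Set.mem_ofPred_eq]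
  exact forall_and

theorem convex_StochMat {I J : Type*} [Fintype J] : Convex ℝ (StochMat I J) :=
  convex_pi fun _ _ => convex_stdSimplex ℝ J

theorem isCompact_StochMat {I J : Type*} [Fintype J] : IsCompact (StochMat I J) :=
  isCompact_univ_pi fun _ => isCompact_stdSimplex ℝ J

theorem mul_logb_div {q w : ℝ} (hw : 0 < w) :
    q * Real.logb 2 (q / w) = (q * Real.log q) / Real.log 2 - q * Real.logb 2 w := by
  by_cases hq : q = 0
  · simp [hq]
  · rw [Real.logb_div hq hw.ne', Real.logb]; ring

theorem continuous_condDiv2 {I J : Type*} [Fintype I] [Fintype J] (c : I → ℝ) (w : I → J → ℝ)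
    (hw : ∀ i j, 0 < w i j) : Continuous fun Z : I → J → ℝ => condDiv2 c Z w := by
  unfold condDiv2
  simp_rw [fun (Z : I → J → ℝ) i j => mul_logb_div (q := Z i j) (hw i j)]
  refine continuous_finsetSum _ fun i _ => continuous_const.mul <|
    continuous_finsetSum _ fun j _ => ?_
  have h : Continuous fun Z : I → J → ℝ => Z i j := by fun_prop
  exact ((Real.continuous_mul_log.comp h).div_const _).sub (h.mul_const _)

theorem convexOn_condDiv2 {I J : Type*} [Fintype I] [Fintype J] (c : I → ℝ) (hc : ∀ i, 0 ≤ c i)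
    (w : I → J → ℝ) (hw : ∀ i j, 0 < w i j) :
    ConvexOn ℝ (StochMat I J) fun Z : I → J → ℝ => condDiv2 c Z w := by
  refine ⟨convex_StochMat, ?_⟩
  intro Z hZ Z' hZ' a b ha hb hab
  rw [mem_StochMat] at hZ hZ'
  simp only [condDiv2, smul_eq_mul, Finset.mul_sum, ← Finset.sum_add_distrib]
  refine Finset.sum_le_sum fun i _ => Finset.sum_le_sum fun j _ => ?_
  rw [mul_logb_div (hw i j), mul_logb_div (hw i j), mul_logb_div (hw i j)]
  have h := Real.convexOn_mul_log.2 (Set.mem_Ici.2 (hZ.1 i j)) (Set.mem_Ici.2 (hZ'.1 i j)) ha hb hab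
  simp only [smul_eq_mul] at h
  have h2 := div_le_div_of_nonneg_right h (Real.log_pos one_lt_two).le
  have h3 := mul_le_mul_of_nonneg_left h2 (hc i)
  simp only [Pi.add_apply, Pi.smul_apply, smul_eq_mul]
  refine (sub_le_sub_right h3 (c i * ((a * Z i j + b * Z' i j) * Real.logb 2 (w i j)))).trans_eq' ?_ |>.trans_eq ?_
  · ring
  · ring

theorem gibbs {J : Type*} [Fintype J] (z w : J → ℝ) (hz : ∀ j, 0 ≤ z j) (hz1 : ∑ j, z j = 1)
    (hw : ∀ j, 0 < w j) :
    -Real.logb 2 (∑ j, w j) ≤ ∑ j, z j * Real.logb 2 (z j / w j) := by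
  have hne : Nonempty J := by
    by_contra h
    rw [not_nonempty_iff] at h
    simp at hz1
  have hS : 0 < ∑ j, w j := Finset.sum_pos (fun j _ => hw j) Finset.univ_nonempty
  set S := ∑ j, w j with hSdef
  have key : ∀ j, z j - w j / S ≤ z j * (Real.log (z j / w j) + Real.log S) := by
    intro j
    rcases (hz j).eq_or_lt with h0 | hpos
    · rw [← h0]; simp; exact (div_pos (hw j) hS).le
    · have := Real.log_le_sub_one_of_pos (x := w j / S / z j) (by have := hw j; positivity)
      rw [Real.log_div (by have := hw j; positivity) hpos.ne', Real.log_div (hw j).ne' hS.ne'] at this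
      rw [Real.log_div hpos.ne' (hw j).ne']
      have h2 := mul_le_mul_of_nonneg_left this hpos.le
      have h3 : z j * (w j / S / z j - 1) = w j / S - z j := by field_simp
      rw [h3] at h2
      linarith
  have h := Finset.sum_le_sum fun j (_ : j ∈ Finset.univ) => key j
  rw [Finset.sum_sub_distrib, hz1, ← Finset.sum_div, ← hSdef, div_self hS.ne', sub_self] at h
  simp_rw [mul_add] at h
  rw [Finset.sum_add_distrib, ← Finset.sum_mul, hz1, one_mul] at h
  simp only [Real.logb, ← mul_div_assoc, ← Finset.sum_div, ← neg_div]
  exact div_le_div_of_nonneg_right (by linarith) (Real.log_pos one_lt_two).le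

theorem gibbs_condDiv2 {I J : Type*} [Fintype I] [Fintype J] (c : I → ℝ) (hc : ∀ i, 0 ≤ c i)
    (w : I → J → ℝ) (hw : ∀ i j, 0 < w i j) {Z : I → J → ℝ} (hZ : Z ∈ StochMat I J) :
    -∑ i, c i * Real.logb 2 (∑ j, w i j) ≤ condDiv2 c Z w := by
  rw [mem_StochMat] at hZ
  rw [← Finset.sum_neg_distrib]
  refine Finset.sum_le_sum fun i _ => ?_
  rw [← mul_neg]
  exact mul_le_mul_of_nonneg_left (gibbs _ _ (hZ.1 i) (hZ.2 i) (hw i)) (hc i)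

theorem gibbs_eq {I J : Type*} [Fintype I] [Fintype J] [Nonempty J] (c : I → ℝ)
    (w : I → J → ℝ) (hw : ∀ i j, 0 < w i j) :
    ∃ Z ∈ StochMat I J, condDiv2 c Z w = -∑ i, c i * Real.logb 2 (∑ j, w i j) := by
  have hS : ∀ i, 0 < ∑ j, w i j := fun i => Finset.sum_pos (fun j _ => hw i j) Finset.univ_nonempty
  have hs1 : ∀ i, ∑ j, w i j / ∑ j', w i j' = 1 := fun i => by
    rw [← Finset.sum_div, div_self (hS i).ne']
  refine ⟨fun i j => w i j / ∑ j', w i j', mem_StochMat.2 ⟨fun i j => (div_pos (hw i j) (hS i)).le, hs1⟩, ?_⟩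
  rw [← Finset.sum_neg_distrib]
  refine Finset.sum_congr rfl fun i _ => ?_
  rw [← mul_neg]
  congr 1
  have : ∀ j, w i j / (∑ j', w i j') / w i j = (∑ j', w i j')⁻¹ := fun j => by
    have := (hw i j).ne'
    have := (hS i).ne'
    field_simp
  simp_rw [this]
  rw [← Finset.sum_mul, hs1, one_mul, Real.logb_inv]

theorem minimax_lt {E F : Type*} [TopologicalSpace E] [AddCommGroup E] [Module ℝ E]
    [IsTopologicalAddGroup E] [ContinuousSMul ℝ E] [TopologicalSpace F] [AddCommGroup F]
    [Module ℝ F] [IsTopologicalAddGroup F] [ContinuousSMul ℝ F]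
    {K : Set E} {A : Set F} (f : E → F → ℝ) (neK : K.Nonempty) (kK : IsCompact K)
    (hfc : ∀ y ∈ A, ContinuousOn (fun x => f x y) K)
    (hfy : ∀ y ∈ A, ConvexOn ℝ K (fun x => f x y)) (cA : Convex ℝ A)
    (hg : ∀ x ∈ K, ∀ y₀ ∈ A, ∃ g : F → ℝ, Continuous g ∧ ConcaveOn ℝ Set.univ g ∧
      (∀ y ∈ A, f x y ≤ g y) ∧ g y₀ = f x y₀)
    {t : ℝ} (ht : ∀ x ∈ K, ∃ y ∈ A, t < f x y) : ∃ y ∈ A, ∀ x ∈ K, t < f x y := by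
  have cK : Convex ℝ K := by
    obtain ⟨x, hx⟩ := neK
    obtain ⟨y, hy, _⟩ := ht x hx
    exact (hfy y hy).1
  have hlsc : ∀ y ∈ A, LowerSemicontinuousOn (fun x => f x y) K :=
    fun y hy => (hfc y hy).lowerSemicontinuousOn
  have hfx : ∀ x ∈ K, UpperSemicontinuousOn (fun y : F => f x y) A := by
    intro x hx y₀ hy₀ b hb
    obtain ⟨g, gc, -, gle, geq⟩ := hg x hx y₀ hy₀
    have : ∀ᶠ y in nhdsWithin y₀ A, g y < b :=
      (gc.continuousAt.eventually_lt continuousAt_const (geq ▸ hb)).filter_mono nhdsWithin_le_nhds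
    filter_upwards [this, self_mem_nhdsWithin] with y h1 h2
    exact (gle y h2).trans_lt h1
  have hfx' : ∀ x ∈ K, QuasiconcaveOn ℝ A fun y => f x y := by
    intro x hx
    refine ConcaveOn.quasiconcaveOn ⟨cA, ?_⟩
    intro y hy y' hy' a b ha hb hab
    obtain ⟨g, -, gc, gle, geq⟩ := hg x hx _ (cA hy hy' ha hb hab)
    have h := gc.2 (Set.mem_univ y) (Set.mem_univ y') ha hb hab
    simp only [smul_eq_mul] at h ⊢
    rw [← geq]
    refine le_trans ?_ h
    gcongr
    · exact gle y hy
    · exact gle y' hy'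
  have : ∃ s : Finset A, ∀ x ∈ K, ∃ i ∈ s, t < f x i := by
    by_cases hA : A.Nonempty
    · rw [← LowerSemicontinuousOn.inter_biInter_preimage_Iic_eq_empty_iff_exists_finset kK hlsc]
      apply Set.eq_empty_of_forall_notMem
      rintro x ⟨hx, hx'⟩
      simp only [Set.mem_iInter, Set.mem_preimage, Set.mem_Iic] at hx'
      obtain ⟨y, hy, hty⟩ := ht x hx
      exact absurd hty (not_lt.2 (hx' y hy))
    · obtain ⟨x, hx⟩ := neK
      obtain ⟨y, hy, _⟩ := ht x hx
      exact absurd ⟨y, hy⟩ hA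
  obtain ⟨s, hs⟩ := this
  refine Sion.exists_lt_iInf_of_lt_iInf_of_finite neK kK hlsc
    (fun y hy => (hfy y hy).quasiconvexOn) cA hfx hfx' cK (s.finite_toSet.image Subtype.val)
    (Subtype.coe_image_subset A ↑s) ?_
  intro x hx
  obtain ⟨i, hi, hi'⟩ := hs x hx
  exact ⟨i.val, ⟨i, hi, rfl⟩, hi'⟩

theorem condDiv2_rpow {X Y : Type*} [Fintype X] [Fintype Y] (U : X → Y → ℝ)
    (hU : ∀ x y, 0 < U x y) (θ : ℝ) (c : Y → ℝ) (Z : Y → X → ℝ) :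
    condDiv2 c Z (fun y x => U x y ^ θ) =
      (∑ y, c y * ∑ x, Z y x * Real.logb 2 (Z y x)) -
        θ * ∑ y, c y * ∑ x, Z y x * Real.logb 2 (U x y) := by
  simp only [condDiv2, Finset.mul_sum, ← Finset.sum_sub_distrib]
  refine Finset.sum_congr rfl fun y _ => Finset.sum_congr rfl fun x _ => ?_
  rw [mul_logb_div (Real.rpow_pos_of_pos (hU x y) θ), Real.logb_rpow_eq_mul_logb_of_pos (hU x y)]
  simp only [Real.logb]
  ring

theorem Utheta_pos {X Y : Type*} [Fintype X] [Nonempty X] (U : X → Y → ℝ)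
    (hU : ∀ x y, 0 < U x y) (θ : ℝ) (x : X) (y : Y) : 0 < Utheta U θ x y :=
  div_pos (Real.rpow_pos_of_pos (hU x y) θ)
    (Finset.sum_pos (fun x' _ => Real.rpow_pos_of_pos (hU x' y) θ) Finset.univ_nonempty)

theorem condDiv2_tilt {X Y : Type*} [Fintype X] [Fintype Y] [Nonempty X]
    (P : X → ℝ) (W : X → Y → ℝ) (hW : ∀ x y, 0 < W x y) (U : X → Y → ℝ)
    (hU : ∀ x y, 0 < U x y) (ρ θ : ℝ) (Q : X → Y → ℝ) :
    condDiv2 P Q (fun x y => W x y / Utheta U θ x y ^ ρ) =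
      condDiv2 P Q W + ρ * ∑ x, ∑ y, P x * Q x y * Real.logb 2 (Utheta U θ x y) := by
  simp only [condDiv2, Finset.mul_sum, ← Finset.sum_add_distrib]
  refine Finset.sum_congr rfl fun x _ => Finset.sum_congr rfl fun y _ => ?_
  have h := Real.rpow_pos_of_pos (Utheta_pos U hU θ x y) ρ
  rw [mul_logb_div (div_pos (hW x y) h), mul_logb_div (hW x y), Real.logb_div (hW x y).ne' h.ne',
    Real.logb_rpow_eq_mul_logb_of_pos (Utheta_pos U hU θ x y)]
  ring

theorem sum_logb_Utheta {X Y : Type*} [Fintype X] [Fintype Y] [Nonempty X]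
    (P : X → ℝ) (U : X → Y → ℝ)
    (hU : ∀ x y, 0 < U x y) (θ : ℝ) (Q : X → Y → ℝ) :
    ∑ x, ∑ y, P x * Q x y * Real.logb 2 (Utheta U θ x y) =
      θ * (∑ x, ∑ y, P x * Q x y * Real.logb 2 (U x y)) -
        ∑ y, (∑ x, P x * Q x y) * Real.logb 2 (∑ x, U x y ^ θ) := by
  simp only [Finset.sum_mul]
  rw [Finset.sum_comm (s := (Finset.univ : Finset Y))]
  simp only [Finset.mul_sum, ← Finset.sum_sub_distrib]
  refine Finset.sum_congr rfl fun x _ => Finset.sum_congr rfl fun y _ => ?_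
  have h : 0 < ∑ x', U x' y ^ θ :=
    Finset.sum_pos (fun x' _ => Real.rpow_pos_of_pos (hU x' y) θ) Finset.univ_nonempty
  rw [Utheta, Real.logb_div (Real.rpow_pos_of_pos (hU x y) θ).ne' h.ne',
    Real.logb_rpow_eq_mul_logb_of_pos (hU x y)]
  ring

/-- inner maximum -/
noncomputable def innerMax {X Y : Type*} [Fintype X] [Fintype Y]
    (P : X → ℝ) (U : X → Y → ℝ) (Q : X → Y → ℝ) : ℝ :=
  ⨆ Q' : {Q' : Y → X → ℝ //
                ((∀ y x, 0 ≤ Q' y x) ∧ ∀ y, ∑ x, Q' y x = 1) ∧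
                (∑ x, ∑ y, P x * Q x y * Real.logb 2 (U x y)) ≤
                  ∑ y, (∑ x, P x * Q x y) * ∑ x, Q' y x * Real.logb 2 (U x y)},
              -∑ y, (∑ x, P x * Q x y) * ∑ x, Q'.1 y x * Real.logb 2 (Q'.1 y x)

section
variable {X Y : Type*} [Fintype X] [Fintype Y] [Nonempty X] [Nonempty Y]
  (P : X → ℝ) (hP0 : ∀ x, 0 ≤ P x)
  (W : X → Y → ℝ) (hW : ∀ x y, 0 < W x y)
  (U : X → Y → ℝ) (hU : ∀ x y, 0 < U x y) (Q : X → Y → ℝ) (hQ : Q ∈ StochMat X Y)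

theorem QY_nonneg (hP0 : ∀ x, 0 ≤ P x) (hQ : Q ∈ StochMat X Y) (y : Y) :
    0 ≤ ∑ x, P x * Q x y :=
  Finset.sum_nonneg fun x _ => mul_nonneg (hP0 x) ((mem_StochMat.1 hQ).1 x y)

theorem entropy_le (hP0 : ∀ x, 0 ≤ P x) (hU : ∀ x y, 0 < U x y) (hQ : Q ∈ StochMat X Y)
    (θ : ℝ) (Z : Y → X → ℝ) (hZ : Z ∈ StochMat Y X) :
    ∑ x, ∑ y, P x * Q x y * Real.logb 2 (Utheta U θ x y) ≤
      (∑ y, (∑ x, P x * Q x y) * ∑ x, Z y x * Real.logb 2 (Z y x)) +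
        θ * ((∑ x, ∑ y, P x * Q x y * Real.logb 2 (U x y)) -
        ∑ y, (∑ x, P x * Q x y) * ∑ x, Z y x * Real.logb 2 (U x y)) := by
  rw [sum_logb_Utheta P U hU]
  have h := gibbs_condDiv2 (fun y => ∑ x, P x * Q x y) (QY_nonneg P Q hP0 hQ)
    (fun y x => U x y ^ θ) (fun y x => Real.rpow_pos_of_pos (hU x y) θ) hZ
  rw [condDiv2_rpow U hU] at h
  linarith

theorem entropy_eq (hU : ∀ x y, 0 < U x y) (θ : ℝ) :
    ∃ Z ∈ StochMat Y X, 
      (∑ y, (∑ x, P x * Q x y) * ∑ x, Z y x * Real.logb 2 (Z y x)) +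
        θ * ((∑ x, ∑ y, P x * Q x y * Real.logb 2 (U x y)) -
        ∑ y, (∑ x, P x * Q x y) * ∑ x, Z y x * Real.logb 2 (U x y)) =
      ∑ x, ∑ y, P x * Q x y * Real.logb 2 (Utheta U θ x y) := by
  obtain ⟨Z, hZ, h⟩ := gibbs_eq (fun y => ∑ x, P x * Q x y)
    (fun y x => U x y ^ θ) (fun y x => Real.rpow_pos_of_pos (hU x y) θ)
  refine ⟨Z, hZ, ?_⟩
  rw [sum_logb_Utheta P U hU]
  rw [condDiv2_rpow U hU] at h
  linarith

theorem innerMax_le (hP0 : ∀ x, 0 ≤ P x) (hU : ∀ x y, 0 < U x y) (hQ : Q ∈ StochMat X Y)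
    (θ : ℝ) (hθ : 0 ≤ θ) :
    innerMax P U Q ≤ -∑ x, ∑ y, P x * Q x y * Real.logb 2 (Utheta U θ x y) := by
  refine Real.iSup_le ?_ ?_
  · rintro ⟨Z, hZ, hc⟩
    have h := entropy_le P U Q hP0 hU hQ θ Z (mem_StochMat.2 hZ)
    have h2 := mul_nonneg hθ (sub_nonneg.2 hc)
    simp only
    linarith
  · rw [neg_nonneg]
    refine Finset.sum_nonpos fun x _ => Finset.sum_nonpos fun y _ => ?_
    refine mul_nonpos_of_nonneg_of_nonpos
      (mul_nonneg (hP0 x) ((mem_StochMat.1 hQ).1 x y)) ?_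
    refine Real.logb_nonpos one_lt_two (Utheta_pos U hU θ x y).le ?_
    exact div_le_one_of_le₀ (Finset.single_le_sum (f := fun x' => U x' y ^ θ)
      (fun x' _ => (Real.rpow_pos_of_pos (hU x' y) θ).le) (Finset.mem_univ x))
      (Finset.sum_nonneg fun x' _ => (Real.rpow_pos_of_pos (hU x' y) θ).le)

theorem le_innerMax (hP0 : ∀ x, 0 ≤ P x) (hU : ∀ x y, 0 < U x y) (hQ : Q ∈ StochMat X Y)
    (Z : Y → X → ℝ) (hZ : Z ∈ StochMat Y X)
    (hc : (∑ x, ∑ y, P x * Q x y * Real.logb 2 (U x y)) ≤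
      ∑ y, (∑ x, P x * Q x y) * ∑ x, Z y x * Real.logb 2 (U x y)) :
    -∑ y, (∑ x, P x * Q x y) * ∑ x, Z y x * Real.logb 2 (Z y x) ≤ innerMax P U Q := by
  refine le_ciSup (f := fun Q' : {Q' : Y → X → ℝ //
                ((∀ y x, 0 ≤ Q' y x) ∧ ∀ y, ∑ x, Q' y x = 1) ∧
                (∑ x, ∑ y, P x * Q x y * Real.logb 2 (U x y)) ≤
                  ∑ y, (∑ x, P x * Q x y) * ∑ x, Q' y x * Real.logb 2 (U x y)} =>
              -∑ y, (∑ x, P x * Q x y) * ∑ x, Q'.1 y x * Real.logb 2 (Q'.1 y x)) ?_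
    ⟨Z, mem_StochMat.1 hZ, hc⟩
  refine ⟨-∑ x, ∑ y, P x * Q x y * Real.logb 2 (Utheta U 0 x y), ?_⟩
  rintro _ ⟨⟨Z', hZ', hc'⟩, rfl⟩
  have h := entropy_le P U Q hP0 hU hQ 0 Z' (mem_StochMat.2 hZ')
  simp only
  linarith

theorem inner_strong (hP0 : ∀ x, 0 ≤ P x) (hU : ∀ x y, 0 < U x y) (hQ : Q ∈ StochMat X Y)
    (s : ℝ) (hs : innerMax P U Q < s) :
    ∃ θ, 0 ≤ θ ∧ -∑ x, ∑ y, P x * Q x y * Real.logb 2 (Utheta U θ x y) < s := by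
  set g := ∑ x, ∑ y, P x * Q x y * Real.logb 2 (U x y) with hg
  set c : Y → ℝ := fun y => ∑ x, P x * Q x y with hcdef
  have hc0 : ∀ y, 0 ≤ c y := QY_nonneg P Q hP0 hQ
  have hpos : ∀ θ : ℝ, ∀ y x, 0 < U x y ^ θ := fun θ y x => Real.rpow_pos_of_pos (hU x y) θ
  have hne : (StochMat Y X).Nonempty := by
    obtain ⟨Z, hZ, -⟩ := entropy_eq P U Q hU 0
    exact ⟨Z, hZ⟩
  have := minimax_lt (K := StochMat Y X) (A := Set.Ici (0:ℝ)) (t := -s)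
    (fun Z θ => condDiv2 c Z (fun y x => U x y ^ θ) + θ * g) hne isCompact_StochMat
    (fun θ _ => ((continuous_condDiv2 c _ (hpos θ)).add continuous_const).continuousOn)
    (fun θ _ => (convexOn_condDiv2 c hc0 _ (hpos θ)).add_const _)
    (convex_Ici 0) ?_ ?_
  · obtain ⟨θ, hθ, h⟩ := this
    refine ⟨θ, hθ, ?_⟩
    obtain ⟨Z, hZ, hZe⟩ := entropy_eq P U Q hU θ
    have h2 := h Z hZ
    rw [condDiv2_rpow U hU] at h2
    linarith
  · intro Z hZ θ₀ _
    refine ⟨fun θ => condDiv2 c Z (fun y x => U x y ^ θ) + θ * g, ?_, ?_, fun _ _ => le_rfl, rfl⟩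
    · simp_rw [condDiv2_rpow U hU]
      fun_prop
    · simp_rw [condDiv2_rpow U hU]
      refine ⟨convex_univ, ?_⟩
      intro a _ b _ u v _ _ huv
      obtain rfl : v = 1 - u := by linarith
      simp only [smul_eq_mul]
      apply le_of_eq
      ring
  · intro Z hZ
    simp_rw [condDiv2_rpow U hU]
    by_cases hc : g ≤ ∑ y, c y * ∑ x, Z y x * Real.logb 2 (U x y)
    · have := le_innerMax P U Q hP0 hU hQ Z hZ hc
      refine ⟨0, Set.mem_Ici.2 le_rfl, ?_⟩
      simp only [zero_mul]
      linarith
    · rw [not_le] at hc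
      set G := ∑ y, c y * ∑ x, Z y x * Real.logb 2 (U x y)
      set h := ∑ y, c y * ∑ x, Z y x * Real.logb 2 (Z y x)
      have hd : 0 < g - G := by linarith
      refine ⟨(|h| + |s| + 1) / (g - G), Set.mem_Ici.2 (by positivity), ?_⟩
      have : (|h| + |s| + 1) / (g - G) * (g - G) = |h| + |s| + 1 := by field_simp
      have h1 := neg_abs_le h
      have h2 := neg_abs_le s
      have h3 := le_abs_self s
      linarith

theorem weak_duality (hP0 : ∀ x, 0 ≤ P x) (hW : ∀ x y, 0 < W x y) (hU : ∀ x y, 0 < U x y)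
    (hQ : Q ∈ StochMat X Y) (H ρ θ : ℝ) (hρ : 0 ≤ ρ) (hρ1 : ρ ≤ 1) (hθ : 0 ≤ θ) :
    -∑ x, P x * Real.logb 2 (∑ y, W x y / Utheta U θ x y ^ ρ) + ρ * H ≤
      condDiv2 P Q W + max (H - innerMax P U Q) 0 := by
  have h := gibbs_condDiv2 P hP0 (fun x y => W x y / Utheta U θ x y ^ ρ)
    (fun x y => div_pos (hW x y) (Real.rpow_pos_of_pos (Utheta_pos U hU θ x y) ρ)) hQ
  rw [condDiv2_tilt P W hW U hU] at h
  have h2 := mul_le_mul_of_nonneg_left (innerMax_le P U Q hP0 hU hQ θ hθ) hρ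
  have h3 : ρ * (H - innerMax P U Q) ≤ max (H - innerMax P U Q) 0 := by
    have := mul_le_mul_of_nonneg_left (le_max_left (H - innerMax P U Q) 0) hρ
    have := mul_le_mul_of_nonneg_right hρ1 (le_max_right (H - innerMax P U Q) 0)
    linarith
  linarith

theorem strong_duality (hP0 : ∀ x, 0 ≤ P x) (hW : ∀ x y, 0 < W x y) (hU : ∀ x y, 0 < U x y)
    (hne : (StochMat X Y).Nonempty) (H t : ℝ)
    (ht : ∀ Q ∈ StochMat X Y, t < condDiv2 P Q W + max (H - innerMax P U Q) 0) :
    ∃ ρ θ : ℝ, 0 ≤ ρ ∧ ρ ≤ 1 ∧ 0 ≤ θ ∧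
      t < -∑ x, P x * Real.logb 2 (∑ y, W x y / Utheta U θ x y ^ ρ) + ρ * H := by
  have hpos : ∀ ρ θ : ℝ, ∀ x y, 0 < W x y / Utheta U θ x y ^ ρ := fun ρ θ x y =>
    div_pos (hW x y) (Real.rpow_pos_of_pos (Utheta_pos U hU θ x y) ρ)
  have := minimax_lt (K := StochMat X Y)
    (A := {p : ℝ × ℝ | 0 ≤ p.1 ∧ p.1 ≤ 1 ∧ 0 ≤ p.2 ∧ (p.1 = 0 → p.2 = 0)}) (t := t)
    (fun Q p => condDiv2 P Q (fun x y => W x y / Utheta U (p.2 / p.1) x y ^ p.1) + p.1 * H)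
    hne isCompact_StochMat
    (fun p _ => ((continuous_condDiv2 P _ (hpos _ _)).add continuous_const).continuousOn)
    (fun p _ => (convexOn_condDiv2 P hP0 _ (hpos _ _)).add_const _)
    ?_ ?_ ?_
  · obtain ⟨p, ⟨h1, h2, h3, -⟩, h⟩ := this
    obtain ⟨Q, hQ, hQe⟩ := gibbs_eq P _ (hpos p.1 (p.2 / p.1))
    refine ⟨p.1, p.2 / p.1, h1, h2, div_nonneg h3 h1, ?_⟩
    have := h Q hQ
    rwa [hQe] at this
  · rintro p ⟨p1, p2, p3, p4⟩ q ⟨q1, q2, q3, q4⟩ a b ha hb hab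
    simp only [Set.mem_ofPred_eq, Prod.fst_add, Prod.snd_add, Prod.smul_fst, Prod.smul_snd,
      smul_eq_mul]
    refine ⟨by positivity, by nlinarith, by positivity, ?_⟩
    intro h0
    have e1 : a * p.1 = 0 := by nlinarith [mul_nonneg ha p1, mul_nonneg hb q1]
    have e2 : b * q.1 = 0 := by nlinarith [mul_nonneg ha p1, mul_nonneg hb q1]
    have e3 : a * p.2 = 0 := by
      rcases mul_eq_zero.1 e1 with h | h
      · simp [h]
      · simp [p4 h]
    have e4 : b * q.2 = 0 := by
      rcases mul_eq_zero.1 e2 with h | h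
      · simp [h]
      · simp [q4 h]
    rw [e3, e4, add_zero]
  · intro Q hQ p₀ hp₀
    obtain ⟨Z, hZ, hZe⟩ := entropy_eq P U Q hU (p₀.2 / p₀.1)
    have hdiv : ∀ p ∈ {p : ℝ × ℝ | 0 ≤ p.1 ∧ p.1 ≤ 1 ∧ 0 ≤ p.2 ∧ (p.1 = 0 → p.2 = 0)},
        p.1 * (p.2 / p.1) = p.2 := by
      rintro p ⟨_, _, _, h4⟩
      by_cases h : p.1 = 0
      · simp [h, h4 h]
      · field_simp
    simp_rw [condDiv2_tilt P W hW U hU]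
    have hle := fun p : ℝ × ℝ => entropy_le P U Q hP0 hU hQ (p.2 / p.1) Z hZ
    set h := ∑ y, (∑ x, P x * Q x y) * ∑ x, Z y x * Real.logb 2 (Z y x)
    set d := (∑ x, ∑ y, P x * Q x y * Real.logb 2 (U x y)) -
        ∑ y, (∑ x, P x * Q x y) * ∑ x, Z y x * Real.logb 2 (U x y)
    refine ⟨fun p => condDiv2 P Q W + p.1 * h + p.2 * d + p.1 * H, by fun_prop, ?_, ?_, ?_⟩
    · refine ⟨convex_univ, ?_⟩
      intro a _ b _ u v _ _ huv
      obtain rfl : v = 1 - u := by linarith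
      simp only [smul_eq_mul, Prod.fst_add, Prod.snd_add, Prod.smul_fst, Prod.smul_snd]
      apply le_of_eq
      ring
    · intro p hp
      have h1 := mul_le_mul_of_nonneg_left (hle p) hp.1
      have h2 := hdiv p hp
      rw [mul_add, ← mul_assoc, h2] at h1
      linarith
    · have h2 := hdiv p₀ hp₀
      simp only
      rw [← hZe, mul_add, ← mul_assoc, h2]
      ring
  · intro Q hQ
    have h := ht Q hQ
    rcases le_total (H - innerMax P U Q) 0 with hm | hm
    · rw [max_eq_right hm] at h
      refine ⟨(0, 0), by simp, ?_⟩
      simpa using h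
    · rw [max_eq_left hm] at h
      obtain ⟨θ, hθ, hs⟩ := inner_strong P U Q hP0 hU hQ (condDiv2 P Q W + H - t) (by linarith)
      refine ⟨(1, θ), by simp [hθ], ?_⟩
      simp only [div_one]
      rw [condDiv2_tilt P W hW U hU]
      linarith

end
/-- Method-of-types (primal) form of the random coding exponent for linear
codes with codebook mismatch equals its Lagrange-dual (Gallager-style) form:
`min_Q { D(Q‖W|P_X) + [H(P_X) − R − max_{Q'∈E(Q)} H_Q(X'|Y)]_+ }
  = max_{ρ∈[0,1]} sup_{θ≥0} { −Σ_x P_X(x) log₂( Σ_y W(y|x)/U_θ(x|y)^ρ ) + ρ(H(P_X) − R) }`,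
where `E(Q)` is the set of conditional assignments `Q'(x|y)` with
`Σ_{x,y} Q_Y(y) Q'(x|y) log₂ U(x,y) ≥ Σ_{x,y} P_X(x)Q(y|x) log₂ U(x,y)` and
`Q_Y(y) = Σ_x P_X(x)Q(y|x)`. -/
theorem primal_dual_exponent_equality
    {X Y : Type*} [Fintype X] [Fintype Y] [Nonempty X] [Nonempty Y]
    (P : X → ℝ) (hP0 : ∀ x, 0 ≤ P x) (hP1 : ∑ x, P x = 1)
    (W : X → Y → ℝ) (hW : ∀ x y, 0 < W x y) (hWsum : ∀ x, ∑ y, W x y = 1)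
    (U : X → Y → ℝ) (hU : ∀ x y, 0 < U x y) (R : ℝ) :
    (⨅ Q : {Q : X → Y → ℝ // (∀ x y, 0 ≤ Q x y) ∧ ∀ x, ∑ y, Q x y = 1},
        condDiv2 P Q.1 W +
          max (entropy2 P - R -
            ⨆ Q' : {Q' : Y → X → ℝ //
                ((∀ y x, 0 ≤ Q' y x) ∧ ∀ y, ∑ x, Q' y x = 1) ∧
                (∑ x, ∑ y, P x * Q.1 x y * Real.logb 2 (U x y)) ≤
                  ∑ y, (∑ x, P x * Q.1 x y) * ∑ x, Q' y x * Real.logb 2 (U x y)},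
              -∑ y, (∑ x, P x * Q.1 x y) * ∑ x, Q'.1 y x * Real.logb 2 (Q'.1 y x)) 0) =
      ⨆ ρ : Set.Icc (0:ℝ) 1, ⨆ θ : Set.Ici (0:ℝ),
        (-∑ x, P x * Real.logb 2 (∑ y, W x y / Utheta U θ.1 x y ^ (ρ.1 : ℝ))
          + ρ.1 * (entropy2 P - R)) := by
  have hWS : W ∈ StochMat X Y := mem_StochMat.2 ⟨fun x y => (hW x y).le, hWsum⟩
  change (⨅ Q : {Q : X → Y → ℝ // (∀ x y, 0 ≤ Q x y) ∧ ∀ x, ∑ y, Q x y = 1},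
        (condDiv2 P Q.1 W + max (entropy2 P - R - innerMax P U Q.1) 0)) = _
  have hne : Nonempty {Q : X → Y → ℝ // (∀ x y, 0 ≤ Q x y) ∧ ∀ x, ∑ y, Q x y = 1} :=
    ⟨⟨W, mem_StochMat.1 hWS⟩⟩
  have hweak : ∀ (Q : {Q : X → Y → ℝ // (∀ x y, 0 ≤ Q x y) ∧ ∀ x, ∑ y, Q x y = 1})
      (ρ : Set.Icc (0:ℝ) 1) (θ : Set.Ici (0:ℝ)),
      (-∑ x, P x * Real.logb 2 (∑ y, W x y / Utheta U θ.1 x y ^ (ρ.1 : ℝ))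
          + ρ.1 * (entropy2 P - R)) ≤
        condDiv2 P Q.1 W + max (entropy2 P - R - innerMax P U Q.1) 0 := fun Q ρ θ =>
    weak_duality P W U Q.1 hP0 hW hU (mem_StochMat.2 Q.2) _ ρ.1 θ.1 ρ.2.1 ρ.2.2 θ.2
  have hneρ : Nonempty (Set.Icc (0:ℝ) 1) := ⟨⟨0, by simp⟩⟩
  have hneθ : Nonempty (Set.Ici (0:ℝ)) := ⟨⟨0, by simp⟩⟩
  apply le_antisymm
  · refine le_of_forall_lt fun t ht => ?_
    obtain ⟨ρ, θ, h1, h2, h3, h⟩ := strong_duality P W U hP0 hW hU ⟨W, hWS⟩ (entropy2 P - R) t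
      (fun Q hQ => ht.trans_le (ciInf_le
        (f := fun Q : {Q : X → Y → ℝ // (∀ x y, 0 ≤ Q x y) ∧ ∀ x, ∑ y, Q x y = 1} =>
          condDiv2 P Q.1 W + max (entropy2 P - R - innerMax P U Q.1) 0)
        ⟨_, by rintro _ ⟨Q, rfl⟩; exact hweak Q ⟨0, by simp⟩ ⟨0, by simp⟩⟩
        ⟨Q, mem_StochMat.1 hQ⟩))
    refine h.trans_le ?_
    have b2 := hweak ⟨W, mem_StochMat.1 hWS⟩
    refine le_trans ?_ (le_ciSup (f := fun ρ : Set.Icc (0:ℝ) 1 => ⨆ θ : Set.Ici (0:ℝ),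
        (-∑ x, P x * Real.logb 2 (∑ y, W x y / Utheta U θ.1 x y ^ (ρ.1 : ℝ))
          + ρ.1 * (entropy2 P - R))) ⟨_, by rintro _ ⟨ρ, rfl⟩; exact ciSup_le (b2 ρ)⟩ ⟨ρ, h1, h2⟩)
    exact le_ciSup (f := fun θ : Set.Ici (0:ℝ) =>
        (-∑ x, P x * Real.logb 2 (∑ y, W x y / Utheta U θ.1 x y ^ ρ)
          + ρ * (entropy2 P - R))) ⟨_, by rintro _ ⟨θ, rfl⟩; exact b2 ⟨ρ, h1, h2⟩ θ⟩ ⟨θ, h3⟩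
  · exact ciSup_le fun ρ => ciSup_le fun θ => le_ciInf fun Q => hweak Q ρ θ
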